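/- Let $\vec{P}=(p_1,p_2)$ with $1<p_1,p_2<\infty$, $1/p=1/p_1+1/p_2$ and $1<p<\infty$, and let $\vec{w}=(w_1,w_2)\in A_{\vec{P}}$. Then there is a constant $C$ depending only on $n$ and $\vec{P}$ such that for every sparse family $\mathcal{S}$ of cubes, $\Big\|\sum_{Q\in\mathcal{S}}\langle\sigma_1\rangle_Q\langle v_{\vec{w}}\rangle_Q\chi_Q\Big\|_{L^{p_2'}(\sigma_2)}\ \le\ C\,[\vec{w}]_{A_{\vec{P}}}^{1/p}\Big(\sum_{Q\in\mathcal{S}}\langle\sigma_1\rangle_Q^{p_2'/p_1}\langle v_{\vec{w}}\rangle_Q^{p_2'/p'}|Q|\Big)^{1/p_2'}$, where $p'$ and $p_2'$ are the conjugate exponents of $p$ and $p_2$. -/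

import Mathlib

open MeasureTheory Set ENNReal

noncomputable section

/-- Euclidean space `ℝⁿ`. -/
abbrev Rn (n : ℕ) := Fin n → ℝ

/-- `Q` is an axis-parallel (half-open) cube of sidelength `h`. -/
def HasSide {n : ℕ} (Q : Set (Rn n)) (h : ℝ) : Prop :=
  ∃ c : Rn n, Q = {x | ∀ i, c i ≤ x i ∧ x i < c i + h}

/-- `Q` is an axis-parallel cube (with positive sidelength). -/
def IsCube {n : ℕ} (Q : Set (Rn n)) : Prop :=
  ∃ h : ℝ, 0 < h ∧ HasSide Q h

/-- A dyadic cubes system: cubes of sidelengths `2^k`, pairwise nested or disjoint,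
and for each fixed `k` the cubes of sidelength `2^k` cover (hence partition) `ℝⁿ`. -/
def IsDyadicSystem {n : ℕ} (D : Set (Set (Rn n))) : Prop :=
  (∀ Q ∈ D, ∃ k : ℤ, HasSide Q ((2 : ℝ) ^ k)) ∧
  (∀ Q ∈ D, ∀ R ∈ D, Q ∩ R = Q ∨ Q ∩ R = R ∨ Q ∩ R = ∅) ∧
  (∀ k : ℤ, ∀ x : Rn n, ∃ Q ∈ D, HasSide Q ((2 : ℝ) ^ k) ∧ x ∈ Q)

/-- A sparse family: each `Q` carries a measurable subset `E Q ⊆ Q` with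
`|E Q| ≥ |Q|/2`, the sets `E Q` being pairwise disjoint. -/
def IsSparse {n : ℕ} (S : Set (Set (Rn n))) : Prop :=
  ∃ E : Set (Rn n) → Set (Rn n),
    (∀ Q ∈ S, E Q ⊆ Q ∧ MeasurableSet (E Q) ∧ volume Q ≤ 2 * volume (E Q)) ∧
    S.Pairwise fun Q R => Disjoint (E Q) (E R)

/-- A weight: a measurable nonnegative (`ℝ≥0∞`-valued) locally integrable function. -/
def IsWeight {n : ℕ} (w : Rn n → ℝ≥0∞) : Prop :=
  Measurable w ∧ ∀ Q : Set (Rn n), IsCube Q → (∫⁻ x in Q, w x) ≠ ∞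

/-- `w(Q) = ∫_Q w`. -/
def mass {n : ℕ} (w : Rn n → ℝ≥0∞) (Q : Set (Rn n)) : ℝ≥0∞ := ∫⁻ x in Q, w x

/-- `⟨w⟩_Q = w(Q)/|Q|`. -/
def avg {n : ℕ} (w : Rn n → ℝ≥0∞) (Q : Set (Rn n)) : ℝ≥0∞ := mass w Q / volume Q

/-- The conjugate exponent `q' = q/(q-1)`. -/
def conj (q : ℝ) : ℝ := q / (q - 1)

/-- The product weight `v_w = w₁^{p/p₁} w₂^{p/p₂}`. -/
def vweight {n : ℕ} (p p1 p2 : ℝ) (w1 w2 : Rn n → ℝ≥0∞) : Rn n → ℝ≥0∞ :=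
  fun x => w1 x ^ (p / p1) * w2 x ^ (p / p2)

/-- The dual weight `σ = w^{1-q'}`. -/
def dualW {n : ℕ} (q : ℝ) (w : Rn n → ℝ≥0∞) : Rn n → ℝ≥0∞ :=
  fun x => w x ^ (1 - conj q)

/-- The multilinear `A_{\vec P}` constant
`[\vec w]_{A_{\vec P}} = sup_Q ⟨v_w⟩_Q ⟨σ₁⟩_Q^{p/p₁'} ⟨σ₂⟩_Q^{p/p₂'}`. -/
def APconst {n : ℕ} (p p1 p2 : ℝ) (w1 w2 : Rn n → ℝ≥0∞) : ℝ≥0∞ :=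
  ⨆ (Q : Set (Rn n)) (_ : IsCube Q),
    avg (vweight p p1 p2 w1 w2) Q * avg (dualW p1 w1) Q ^ (p / conj p1) *
      avg (dualW p2 w2) Q ^ (p / conj p2)

/-- The (linear) `A_q` constant `[w]_{A_q} = sup_Q ⟨w⟩_Q ⟨w^{1-q'}⟩_Q^{q-1}`. -/
def AqConst {n : ℕ} (q : ℝ) (w : Rn n → ℝ≥0∞) : ℝ≥0∞ :=
  ⨆ (Q : Set (Rn n)) (_ : IsCube Q),
    avg w Q * avg (fun x => w x ^ (1 - conj q)) Q ^ (q - 1)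

/-- The Hardy–Littlewood maximal operator (over axis-parallel cubes). -/
def HLMax {n : ℕ} (w : Rn n → ℝ≥0∞) (x : Rn n) : ℝ≥0∞ :=
  ⨆ (Q : Set (Rn n)) (_ : IsCube Q) (_ : x ∈ Q), avg w Q

/-- The Fujii–Wilson `A_∞` constant `[w]_{A_∞} = sup_Q w(Q)⁻¹ ∫_Q M(wχ_Q)`. -/
def AinfConst {n : ℕ} (w : Rn n → ℝ≥0∞) : ℝ≥0∞ :=
  ⨆ (Q : Set (Rn n)) (_ : IsCube Q), (∫⁻ x in Q, HLMax (Q.indicator w) x) / mass w Q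

/-- `‖g‖_{L^p(v)}` for an `ℝ≥0∞`-valued function. -/
def lpNorm {n : ℕ} (g : Rn n → ℝ≥0∞) (p : ℝ) (v : Rn n → ℝ≥0∞) : ℝ≥0∞ :=
  (∫⁻ x, g x ^ p * v x) ^ (1 / p)

/-- `‖g‖_{L^{p,∞}(v)} = sup_{t>0} t · v({g > t})^{1/p}`. -/
def wkNorm {n : ℕ} (g : Rn n → ℝ≥0∞) (p : ℝ) (v : Rn n → ℝ≥0∞) : ℝ≥0∞ :=
  ⨆ t : ℝ≥0∞, t * mass v {x | t < g x} ^ (1 / p)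

/-- The pointwise `ℝ≥0∞`-valued absolute value of a real function. -/
def eAbs {n : ℕ} (f : Rn n → ℝ) : Rn n → ℝ≥0∞ := fun x => (‖f x‖₊ : ℝ≥0∞)

/-- `f ∈ L^p(v)`. -/
def MemLpW {n : ℕ} (f : Rn n → ℝ) (p : ℝ) (v : Rn n → ℝ≥0∞) : Prop :=
  Measurable f ∧ lpNorm (eAbs f) p v ≠ ∞

/-- The bilinear sparse operator `A_{D,S}(g₁,g₂) = ∑_{Q∈S} ⟨g₁⟩_Q ⟨g₂⟩_Q χ_Q`. -/
def sparseOp {n : ℕ} (S : Set (Set (Rn n))) (g1 g2 : Rn n → ℝ≥0∞) (x : Rn n) : ℝ≥0∞ :=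
  ∑' Q : S, Set.indicator (Q : Set (Rn n)) (fun _ => avg g1 Q * avg g2 Q) x

/-- The weighted average `⟨f⟩_Q^w = (∫_Q |f| w)/w(Q)`. -/
def wAvg {n : ℕ} (f : Rn n → ℝ) (w : Rn n → ℝ≥0∞) (Q : Set (Rn n)) : ℝ≥0∞ :=
  (∫⁻ x in Q, (‖f x‖₊ : ℝ≥0∞) * w x) / mass w Q


/-- The exponent `β = 1/p + max{min{1/p₁', (1/p₁')(p₂'/p)}, min{1/p₂', (1/p₂')(p₁'/p)}}`. -/
def betaExp (p p1 p2 : ℝ) : ℝ :=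
  1 / p + max (min (1 / conj p1) (1 / conj p1 * (conj p2 / p)))
              (min (1 / conj p2) (1 / conj p2 * (conj p1 / p)))

/-- The exponent `γ = max{1, p₁'/p, p₂'/p}`. -/
def gammaExp (p p1 p2 : ℝ) : ℝ := max 1 (max (conj p1 / p) (conj p2 / p))

end



theorem pw_aux (y a : ℝ≥0∞) (r : ℝ) (hr : 0 < r) :
    (y + a) ^ (r + 1) ≤ y ^ (r + 1) + ENNReal.ofReal (r + 1) * (a * (y + a) ^ r) := by
  by_cases ha0 : a = 0
  · simp [ha0]
  by_cases htop : y + a = ∞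
  · have : ENNReal.ofReal (r + 1) * (a * (y + a) ^ r) = ∞ := by
      rw [htop, ENNReal.top_rpow_of_pos hr, ENNReal.mul_top ha0, ENNReal.mul_top]
      simp; linarith
    rw [this]; simp
  have hy : y ≠ ∞ := fun h => htop (by simp [h])
  have ha : a ≠ ∞ := fun h => htop (by simp [h])
  lift y to NNReal using hy
  lift a to NNReal using ha
  have ha0' : (0:ℝ) < a := by
    have : a ≠ 0 := by simpa using ha0
    exact_mod_cast pos_iff_ne_zero.mpr this
  have key : ((y:ℝ) + a) ^ (r+1) ≤ (y:ℝ)^(r+1) + (r+1) * (a * ((y:ℝ)+a)^r) := by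
    have hz : 0 < (y:ℝ) + a := by positivity
    have hy0 : (0:ℝ) ≤ y := y.2
    have h := one_add_mul_self_le_rpow_one_add (s := - (a / ((y:ℝ) + a))) (p := r+1)
      (by rw [neg_le_neg_iff, div_le_one hz]; linarith) (by linarith)
    have e : 1 + - (a / ((y:ℝ) + a)) = y / (y + a) := by field_simp; ring
    rw [e, Real.div_rpow hy0 hz.le, le_div_iff₀ (by positivity)] at h
    rw [Real.rpow_add hz, Real.rpow_one] at h ⊢
    have e2 : (1 + (r + 1) * -(↑a / (↑y + ↑a))) * (((y:ℝ) + ↑a) ^ r * (↑y + ↑a))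
       = ((y:ℝ) + ↑a) ^ r * (↑y + ↑a) - (r+1) * (a * ((y:ℝ)+a)^r) := by field_simp; ring
    linarith
  have key2 := ENNReal.ofReal_le_ofReal key
  rw [ENNReal.ofReal_add (by positivity) (by positivity),
    ENNReal.ofReal_mul (by positivity), ENNReal.ofReal_mul (by positivity),
    ← ENNReal.ofReal_rpow_of_nonneg (by positivity) (by positivity),
    ← ENNReal.ofReal_rpow_of_nonneg (by positivity) (by positivity),
    ← ENNReal.ofReal_rpow_of_nonneg (by positivity) (by positivity),
    ENNReal.ofReal_add (by positivity) (by positivity)] at key2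
  simpa using key2

open Classical in
theorem pw_chain {α : Type*} (a : Set α → ℝ≥0∞) (r : ℝ) (hr : 0 < r) (G : Finset (Set α))
    (hch : ∀ Q ∈ G, ∀ R ∈ G, Q ⊆ R ∨ R ⊆ Q) :
    (∑ Q ∈ G, a Q) ^ (r + 1) ≤
      ENNReal.ofReal (r + 1) * ∑ Q ∈ G, a Q * (∑ R ∈ G with R ⊆ Q, a R) ^ r := by
  induction G using Finset.strongInduction with
  | H G ih =>
    rcases G.eq_empty_or_nonempty with rfl | hne
    · simp; linarith
    obtain ⟨M, hM⟩ := G.exists_maximal hne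
    have hMG := hM.1
    have hall : ∀ Q ∈ G, Q ⊆ M := fun Q hQ => by
      rcases hch Q hQ M hMG with h | h
      · exact h
      · exact hM.2 hQ h
    have ih' := ih (G.erase M) (Finset.erase_ssubset hMG)
      (fun Q hQ R hR => hch Q (Finset.mem_of_mem_erase hQ) R (Finset.mem_of_mem_erase hR))
    rw [← Finset.sum_erase_add G _ hMG, ← Finset.sum_erase_add G (fun Q => a Q * _) hMG]
    refine (pw_aux _ _ r hr).trans ?_
    rw [mul_add]
    refine add_le_add (ih'.trans ?_) ?_
    · gcongr
      exact Finset.erase_subset _ _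
    · gcongr
      rw [Finset.filter_true_of_mem hall, ← Finset.sum_erase_add G _ hMG]

open Classical in
theorem pw_ind {α : Type*} (a : Set α → ℝ≥0∞) (r : ℝ) (hr : 0 < r) (F : Finset (Set α))
    (hch : ∀ Q ∈ F, ∀ R ∈ F, Q ⊆ R ∨ R ⊆ Q ∨ Q ∩ R = ∅) (x : α) :
    (∑ Q ∈ F, Q.indicator (fun _ => a Q) x) ^ (r + 1) ≤
      ENNReal.ofReal (r + 1) * ∑ Q ∈ F, a Q *
        Q.indicator (fun x => (∑ R ∈ F with R ⊆ Q, R.indicator (fun _ => a R) x) ^ r) x := by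
  have h1 : ∑ Q ∈ F, Q.indicator (fun _ => a Q) x = ∑ Q ∈ F with x ∈ Q, a Q := by
    rw [Finset.sum_filter]; rfl
  rw [h1]
  refine (pw_chain a r hr _ ?_).trans ?_
  · intro Q hQ R hR
    simp only [Finset.mem_filter] at hQ hR
    rcases hch Q hQ.1 R hR.1 with h | h | h
    · exact Or.inl h
    · exact Or.inr h
    · exact absurd (h.subset ⟨hQ.2, hR.2⟩) (Set.notMem_empty x)
  · gcongr
    rw [Finset.sum_filter]
    refine Finset.sum_le_sum fun Q hQ => ?_
    split_ifs with hx
    · rw [Set.indicator_of_mem hx]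
      gcongr
      rw [Finset.filter_filter, Finset.sum_filter, Finset.sum_filter]
      refine Finset.sum_le_sum fun R hR => ?_
      split_ifs with h1 h2 h2
      · rw [Set.indicator_of_mem h1.1]
      · exact absurd h1.2 h2
      · exact zero_le
      · exact le_rfl
    · exact zero_le

open Classical in
theorem int_step {α : Type*} [MeasurableSpace α] (ν : Measure α) (a : Set α → ℝ≥0∞) (r : ℝ)
    (hr : 0 < r) (F : Finset (Set α)) (hm : ∀ Q ∈ F, MeasurableSet Q)
    (hch : ∀ Q ∈ F, ∀ R ∈ F, Q ⊆ R ∨ R ⊆ Q ∨ Q ∩ R = ∅) :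
    ∫⁻ x, (∑ Q ∈ F, Q.indicator (fun _ => a Q) x) ^ (r + 1) ∂ν ≤
      ENNReal.ofReal (r + 1) * ∑ Q ∈ F, a Q *
        ∫⁻ x in Q, (∑ R ∈ F with R ⊆ Q, R.indicator (fun _ => a R) x) ^ r ∂ν := by
  have hmeas : ∀ Q : Set α, Measurable
      (fun x => (∑ R ∈ F with R ⊆ Q, R.indicator (fun _ => a R) x) ^ r) := by
    intro Q
    refine Measurable.pow_const ?_ r
    refine Finset.measurable_sum _ fun R hR => ?_
    exact measurable_const.indicator (hm R (Finset.mem_filter.mp hR).1)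
  refine (lintegral_mono fun x => pw_ind a r hr F hch x).trans ?_
  rw [lintegral_const_mul', lintegral_finsetSum]
  · gcongr with Q hQ
    rw [lintegral_const_mul, lintegral_indicator (hm Q hQ)]
    exact (hmeas Q).indicator (hm Q hQ)
  · intro Q hQ
    exact ((hmeas Q).indicator (hm Q hQ)).const_mul _
  · exact ENNReal.ofReal_ne_top

open Classical in
theorem iter_bound {α : Type*} [MeasurableSpace α] (R : ℝ) (hR : 1 ≤ R) (K : ℝ → ℝ≥0∞)
    (hK : ∀ r, 0 ≤ r → r + 1 ≤ R → K r ≠ ∞) (k : ℕ) : ∀ r : ℝ, 0 < r → r ≤ R → r ≤ k + 1 → ∃ C : ℝ≥0∞, C ≠ ∞ ∧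
      ∀ (ν : Measure α) (F : Finset (Set α)), (∀ Q ∈ F, MeasurableSet Q) →
      (∀ Q ∈ F, ∀ R ∈ F, Q ⊆ R ∨ R ⊆ Q ∨ Q ∩ R = ∅) → (∀ Q ∈ F, ν Q ≠ 0 ∧ ν Q ≠ ∞) →
      ∀ a B : Set α → ℝ≥0∞,
      (∀ r' : ℝ, 0 ≤ r' → r' + 1 ≤ R → ∀ Q ∈ F,
        ∑ Q' ∈ F with Q' ⊆ Q, a Q' * B Q' ^ r' * ν Q' ≤ K r' * B Q ^ (r' + 1) * ν Q) →
      ∀ Q ∈ F, ∫⁻ x in Q, (∑ R ∈ F with R ⊆ Q, R.indicator (fun _ => a R) x) ^ r ∂ν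
        ≤ C * B Q ^ r * ν Q := by
  have base : ∀ r : ℝ, 0 < r → r ≤ 1 → ∃ C : ℝ≥0∞, C ≠ ∞ ∧
      ∀ (ν : Measure α) (F : Finset (Set α)), (∀ Q ∈ F, MeasurableSet Q) →
      (∀ Q ∈ F, ∀ R ∈ F, Q ⊆ R ∨ R ⊆ Q ∨ Q ∩ R = ∅) → (∀ Q ∈ F, ν Q ≠ 0 ∧ ν Q ≠ ∞) →
      ∀ a B : Set α → ℝ≥0∞,
      (∀ r' : ℝ, 0 ≤ r' → r' + 1 ≤ R → ∀ Q ∈ F,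
        ∑ Q' ∈ F with Q' ⊆ Q, a Q' * B Q' ^ r' * ν Q' ≤ K r' * B Q ^ (r' + 1) * ν Q) →
      ∀ Q ∈ F, ∫⁻ x in Q, (∑ R ∈ F with R ⊆ Q, R.indicator (fun _ => a R) x) ^ r ∂ν
        ≤ C * B Q ^ r * ν Q := by
    intro r hr0 hr1
    refine ⟨K 0 ^ r, ENNReal.rpow_ne_top_of_nonneg hr0.le (hK 0 le_rfl (by linarith)), ?_⟩
    intro ν F hm hch hν a B H Q hQ
    have hmeas : Measurable (fun x => ∑ R ∈ F with R ⊆ Q, R.indicator (fun _ => a R) x) := by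
      refine Finset.measurable_sum _ fun R hR => ?_
      exact measurable_const.indicator (hm R (Finset.mem_filter.mp hR).1)
    have h1 := ENNReal.lintegral_mul_norm_pow_le (μ := ν.restrict Q) hmeas.aemeasurable
      (aemeasurable_const (b := (1 : ℝ≥0∞))) hr0.le (by linarith : 0 ≤ 1 - r) (by ring)
    simp only [ENNReal.one_rpow, mul_one, lintegral_const, one_mul,
      Measure.restrict_apply_univ] at h1
    refine h1.trans ?_
    have h2 : ∫⁻ x in Q, ∑ R ∈ F with R ⊆ Q, R.indicator (fun _ => a R) x ∂ν
        ≤ K 0 * B Q * ν Q := by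
      have := H 0 le_rfl (by linarith) Q hQ
      simp only [ENNReal.rpow_zero, mul_one, zero_add, ENNReal.rpow_one] at this
      refine le_trans ?_ this
      rw [lintegral_finsetSum]
      · refine Finset.sum_le_sum fun R hR => ?_
        rw [lintegral_indicator (hm R (Finset.mem_filter.mp hR).1), lintegral_const,
          Measure.restrict_apply_univ]
        gcongr
        exact Measure.restrict_le_self
      · intro R hR
        exact measurable_const.indicator (hm R (Finset.mem_filter.mp hR).1)
    calc _ ≤ (K 0 * B Q * ν Q) ^ r * ν Q ^ (1 - r) := by gcongr
      _ = K 0 ^ r * B Q ^ r * (ν Q ^ r * ν Q ^ (1 - r)) := by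
        rw [ENNReal.mul_rpow_of_nonneg _ _ hr0.le, ENNReal.mul_rpow_of_nonneg _ _ hr0.le]; ring
      _ = _ := by
        rw [← ENNReal.rpow_add _ _ (hν Q hQ).1 (hν Q hQ).2]; simp
  induction k with
  | zero => 
    intro r hr0 hrR hr1
    exact base r hr0 (by simpa using hr1)
  | succ k ih =>
    intro r hr0 hrR hrk
    rcases le_or_gt r 1 with h1 | h1
    · exact base r hr0 h1
    obtain ⟨C', hC', ih'⟩ := ih (r - 1) (by linarith) (by linarith) (by push_cast at hrk; linarith)
    refine ⟨ENNReal.ofReal r * C' * K (r - 1), ENNReal.mul_ne_top (ENNReal.mul_ne_top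
      ENNReal.ofReal_ne_top hC') (hK _ (by linarith) (by linarith)), ?_⟩
    intro ν F hm hch hν a B H Q hQ
    have hs := int_step ν a (r - 1) (by linarith) (F.filter (· ⊆ Q))
      (fun R hR => hm R (Finset.mem_filter.mp hR).1)
      (fun R hR R' hR' => hch R (Finset.mem_filter.mp hR).1 R' (Finset.mem_filter.mp hR').1)
    rw [sub_add_cancel] at hs
    refine (setLIntegral_le_lintegral _ _).trans (hs.trans ?_)
    have H' := H (r - 1) (by linarith) (by linarith) Q hQ
    rw [sub_add_cancel] at H'
    calc _ ≤ ENNReal.ofReal r * ∑ Q' ∈ F with Q' ⊆ Q, a Q' * (C' * B Q' ^ (r - 1) * ν Q') := by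
          gcongr with Q' hQ'
          refine le_trans ?_ (ih' ν F hm hch hν a B H Q' (Finset.mem_filter.mp hQ').1)
          gcongr
          exact Finset.filter_subset _ _
      _ = ENNReal.ofReal r * C' * ∑ Q' ∈ F with Q' ⊆ Q, a Q' * B Q' ^ (r - 1) * ν Q' := by
          rw [mul_assoc, Finset.mul_sum _ _ C']
          congr 1
          exact Finset.sum_congr rfl fun _ _ => by ring
      _ ≤ ENNReal.ofReal r * C' * (K (r - 1) * B Q ^ r * ν Q) := by gcongr
      _ = _ := by ring

/-- Covering comparison for finite nested families. -/
theorem union_le {α : Type*} [MeasurableSpace α] (μ ν : Measure α) (G : Finset (Set α))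
    (hm : ∀ Q ∈ G, MeasurableSet Q)
    (hch : ∀ Q ∈ G, ∀ R ∈ G, Q ⊆ R ∨ R ⊆ Q ∨ Q ∩ R = ∅)
    (h : ∀ Q ∈ G, μ Q ≤ ν Q) : μ (⋃ Q ∈ G, Q) ≤ ν (⋃ Q ∈ G, Q) := by
  classical
  induction G using Finset.strongInduction with
  | H G ih =>
    rcases G.eq_empty_or_nonempty with rfl | hne
    · simp
    obtain ⟨M, hM⟩ := G.exists_maximal hne
    have hMG := hM.1
    set G' := G.filter (fun Q => Q ∩ M = ∅ ∧ Q ≠ M) with hG'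
    have hsub : G' ⊆ G := Finset.filter_subset _ _
    have hss : G' ⊂ G := by
      refine Finset.ssubset_iff_subset_ne.mpr ⟨hsub, fun he => ?_⟩
      rw [← he, hG', Finset.mem_filter] at hMG
      exact hMG.2.2 rfl
    have ih' := ih G' hss (fun Q hQ => hm Q (hsub hQ))
      (fun Q hQ R hR => hch Q (hsub hQ) R (hsub hR)) (fun Q hQ => h Q (hsub hQ))
    have hU : (⋃ Q ∈ G, Q) = M ∪ ⋃ Q ∈ G', Q := by
      apply subset_antisymm
      · refine iUnion₂_subset fun Q hQ => ?_
        by_cases hQM : Q = M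
        · rw [hQM]; exact subset_union_left
        rcases hch Q hQ M hMG with h | h | h
        · exact h.trans subset_union_left
        · exact (hM.2 hQ h).trans subset_union_left
        · exact (subset_biUnion_of_mem (u := fun Q => Q)
            (show Q ∈ G' from Finset.mem_filter.mpr ⟨hQ, h, hQM⟩)).trans subset_union_right
      · refine union_subset (subset_biUnion_of_mem (u := fun Q => Q) hMG) ?_
        exact biUnion_subset_biUnion_left hsub
    have hd : Disjoint M (⋃ Q ∈ G', Q) := by
      rw [disjoint_iUnion₂_right]
      intro Q hQ
      rw [disjoint_iff_inter_eq_empty, inter_comm]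
      exact (Finset.mem_filter.mp hQ).2.1
    have hmU : MeasurableSet (⋃ Q ∈ G', Q) := Finset.measurableSet_biUnion _ fun Q hQ => hm Q (hsub hQ)
    rw [hU, measure_union hd hmU, measure_union hd hmU]
    exact add_le_add (h M hMG) ih'

theorem dyadic_layer (L x : ℝ≥0∞) (s : ℝ) (hs : 0 < s) (hL0 : L ≠ 0) (hL : L ≠ ∞) :
    x ^ s ≤ L ^ s + ∑' k : ℕ, (if 2 ^ k * L < x then (2 ^ (k + 1) * L) ^ s else 0) := by
  rcases le_or_gt x L with h | h
  · exact (ENNReal.rpow_le_rpow h hs.le).trans le_self_add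
  by_cases hx : x = ∞
  · refine le_add_left ?_
    have : ∑' k : ℕ, (L ^ s) = ∞ := ENNReal.tsum_const_eq_top_of_ne_zero
      (by simp [ENNReal.rpow_eq_zero_iff, hL0, hL])
    refine le_top.trans (this.symm.le.trans (ENNReal.tsum_le_tsum fun k => ?_))
    rw [if_pos]
    · refine ENNReal.rpow_le_rpow ?_ hs.le
      exact le_mul_of_one_le_left zero_le (one_le_pow₀ (by norm_num))
    · rw [hx]; exact (ENNReal.mul_ne_top (by simp) hL).lt_top
  · -- finite case: pick the least k with x ≤ 2 ^ (k+1) * L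
    have hex : ∃ k : ℕ, x ≤ 2 ^ (k + 1) * L := by
      obtain ⟨m, hm⟩ := ENNReal.exists_nat_mul_gt hL0 hx
      refine ⟨m, hm.le.trans ?_⟩
      gcongr
      exact_mod_cast (Nat.lt_two_pow_self.le.trans (Nat.pow_le_pow_right (by norm_num) (Nat.le_succ m)) : m ≤ 2 ^ (m+1))
    classical
    let k := Nat.find hex
    have hk : x ≤ 2 ^ (k + 1) * L := Nat.find_spec hex
    have hk' : 2 ^ k * L < x := by
      rcases hkk : k with _ | j
      · simpa using h
      · exact not_le.mp (Nat.find_min hex (m := j) (by change j < k; omega))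
    refine le_add_left ?_
    refine le_trans ?_ (ENNReal.le_tsum k)
    rw [if_pos hk']
    exact ENNReal.rpow_le_rpow hk hs.le

theorem sparse_sum_le {α : Type*} [MeasurableSpace α] (μ : Measure α) (E : Set α → Set α)
    (G : Finset (Set α)) (hE : ∀ Q ∈ G, E Q ⊆ Q ∧ MeasurableSet (E Q) ∧ μ Q ≤ 2 * μ (E Q))
    (hd : (G : Set (Set α)).Pairwise fun Q R => Disjoint (E Q) (E R)) :
    ∑ Q ∈ G, μ Q ≤ 2 * μ (⋃ Q ∈ G, Q) := by
  calc ∑ Q ∈ G, μ Q ≤ ∑ Q ∈ G, 2 * μ (E Q) := Finset.sum_le_sum fun Q hQ => (hE Q hQ).2.2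
    _ = 2 * μ (⋃ Q ∈ G, E Q) := by
      rw [← Finset.mul_sum, measure_biUnion_finset hd (fun Q hQ => (hE Q hQ).2.1)]
    _ ≤ _ := by
      gcongr with Q hQ
      exact (hE Q hQ).1

/-- The constant in the one-function sparse Kolmogorov inequality. -/
noncomputable def kolC (s : ℝ) : ℝ≥0∞ := 2 + 2 * 2 ^ s * ∑' k : ℕ, ((2:ℝ≥0∞) ^ s * 2⁻¹) ^ k

theorem kolC_ne_top (s : ℝ) (hs0 : 0 < s) (hs : s < 1) : kolC s ≠ ∞ := by
  have h2 : (2:ℝ≥0∞) ^ s ≠ ∞ := ENNReal.rpow_ne_top_of_nonneg hs0.le (by simp)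
  unfold kolC
  rw [ENNReal.tsum_geometric]
  refine ENNReal.add_ne_top.mpr ⟨by simp, ENNReal.mul_ne_top (ENNReal.mul_ne_top (by simp) h2) ?_⟩
  rw [Ne, ENNReal.inv_eq_top, tsub_eq_zero_iff_le, not_le]
  rw [← div_eq_mul_inv, ENNReal.div_lt_iff (by simp) (by simp), one_mul]
  calc (2:ℝ≥0∞) ^ s < 2 ^ (1:ℝ) := ENNReal.rpow_lt_rpow_of_exponent_lt (by norm_num) (by simp) hs
    _ = 2 := by simp

open Classical in
theorem kolm {α : Type*} [MeasurableSpace α] (μ ρ : Measure α) (E : Set α → Set α)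
    (F : Finset (Set α)) (hE : ∀ Q ∈ F, E Q ⊆ Q ∧ MeasurableSet (E Q) ∧ μ Q ≤ 2 * μ (E Q))
    (hd : (F : Set (Set α)).Pairwise fun Q R => Disjoint (E Q) (E R))
    (hm : ∀ Q ∈ F, MeasurableSet Q)
    (hch : ∀ Q ∈ F, ∀ R ∈ F, Q ⊆ R ∨ R ⊆ Q ∨ Q ∩ R = ∅)
    (hμ : ∀ Q ∈ F, μ Q ≠ 0 ∧ μ Q ≠ ∞) (hρ : ∀ Q ∈ F, ρ Q ≠ 0 ∧ ρ Q ≠ ∞) (s : ℝ) (hs0 : 0 < s)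
    (Q : Set α) (hQ : Q ∈ F) :
    ∑ Q' ∈ F with Q' ⊆ Q, (ρ Q' / μ Q') ^ s * μ Q' ≤ kolC s * ((ρ Q / μ Q) ^ s * μ Q) := by
  set L := ρ Q / μ Q with hL
  have hL0 : L ≠ 0 := by
    rw [hL, Ne, ENNReal.div_eq_zero_iff]; push Not; exact ⟨(hρ Q hQ).1, (hμ Q hQ).2⟩
  have hLt : L ≠ ∞ := ENNReal.div_ne_top (hρ Q hQ).2 (hμ Q hQ).1
  have hLQ : L * μ Q = ρ Q := ENNReal.div_mul_cancel (hμ Q hQ).1 (hμ Q hQ).2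
  have hcube : ∀ G ⊆ F.filter (· ⊆ Q), ∑ R ∈ G, μ R ≤ 2 * μ (⋃ R ∈ G, R) ∧ (⋃ R ∈ G, R) ⊆ Q := by
    intro G hG
    have hGF : G ⊆ F := hG.trans (Finset.filter_subset _ _)
    refine ⟨sparse_sum_le μ E G (fun R hR => hE R (hGF hR)) (hd.mono hGF), ?_⟩
    exact iUnion₂_subset fun R hR => (Finset.mem_filter.mp (hG hR)).2
  have hk : ∀ k : ℕ, ∑ R ∈ (F.filter (· ⊆ Q)).filter (fun R => 2 ^ k * L < ρ R / μ R), μ R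
      ≤ 2 * ((2⁻¹) ^ k * μ Q) := by
    intro k
    set G := (F.filter (· ⊆ Q)).filter (fun R => 2 ^ k * L < ρ R / μ R) with hG
    have hGF : G ⊆ F := (Finset.filter_subset _ _).trans (Finset.filter_subset _ _)
    obtain ⟨h1, h2⟩ := hcube G (Finset.filter_subset _ _)
    refine h1.trans ?_
    gcongr
    have h3 := union_le ((2 ^ k * L) • μ) ρ G (fun R hR => hm R (hGF hR))
      (fun R hR R' hR' => hch R (hGF hR) R' (hGF hR')) (fun R hR => by
        have := (Finset.mem_filter.mp hR).2.le
        rw [ENNReal.le_div_iff_mul_le (Or.inl (hμ R (hGF hR)).1) (Or.inl (hμ R (hGF hR)).2)] at this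
        simpa using this)
    simp only [Measure.smul_apply, smul_eq_mul] at h3
    have h4 : L * (2 ^ k * μ (⋃ R ∈ G, R)) ≤ L * μ Q := by
      rw [hLQ, ← mul_assoc, mul_comm L]
      exact h3.trans (measure_mono h2)
    rw [ENNReal.mul_le_mul_iff_right hL0 hLt] at h4
    rw [← ENNReal.inv_pow, mul_comm, ← div_eq_mul_inv, ENNReal.le_div_iff_mul_le (by simp) (by simp)]
    rwa [mul_comm]
  calc ∑ Q' ∈ F with Q' ⊆ Q, (ρ Q' / μ Q') ^ s * μ Q'
      ≤ ∑ Q' ∈ F with Q' ⊆ Q, (L ^ s + ∑' k : ℕ,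
          (if 2 ^ k * L < ρ Q' / μ Q' then (2 ^ (k + 1) * L) ^ s else 0)) * μ Q' := by
        gcongr with Q' hQ'
        exact dyadic_layer L _ s hs0 hL0 hLt
    _ = L ^ s * (∑ Q' ∈ F with Q' ⊆ Q, μ Q') + ∑' k : ℕ, (2 ^ (k + 1) * L) ^ s *
          ∑ R ∈ (F.filter (· ⊆ Q)).filter (fun R => 2 ^ k * L < ρ R / μ R), μ R := by
        simp only [add_mul, Finset.sum_add_distrib, Finset.mul_sum, ← ENNReal.tsum_mul_right]
        congr 1
        rw [← Summable.tsum_finsetSum (fun _ _ => ENNReal.summable)]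
        congr 1
        ext k
        rw [Finset.sum_filter (p := fun R => 2 ^ k * L < ρ R / μ R)]
        refine Finset.sum_congr rfl fun R _ => ?_
        split_ifs <;> simp
    _ ≤ L ^ s * (2 * μ Q) + ∑' k : ℕ, (2 ^ (k + 1) * L) ^ s * (2 * ((2⁻¹) ^ k * μ Q)) := by
        gcongr with k
        · obtain ⟨h1, h2⟩ := hcube _ (Finset.Subset.refl _)
          refine h1.trans ?_
          gcongr
        · exact hk k
    _ = L ^ s * (2 * μ Q) + ∑' k : ℕ, (2 * 2 ^ s * (L ^ s * μ Q)) * ((2:ℝ≥0∞) ^ s * 2⁻¹) ^ k := by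
        congr 2
        ext k
        rw [ENNReal.mul_rpow_of_nonneg _ _ hs0.le, ← ENNReal.rpow_natCast 2 (k+1),
          ← ENNReal.rpow_mul, mul_comm ((k+1 : ℕ):ℝ) s, ENNReal.rpow_mul, ENNReal.rpow_natCast,
          mul_pow, pow_succ]
        ring
    _ = _ := by
        rw [ENNReal.tsum_mul_left, kolC]; ring

open Classical in
theorem kolm3 {α : Type*} [MeasurableSpace α] (μ ρ1 ρ2 ρ3 : Measure α) (E : Set α → Set α)
    (F : Finset (Set α)) (hE : ∀ Q ∈ F, E Q ⊆ Q ∧ MeasurableSet (E Q) ∧ μ Q ≤ 2 * μ (E Q))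
    (hd : (F : Set (Set α)).Pairwise fun Q R => Disjoint (E Q) (E R))
    (hm : ∀ Q ∈ F, MeasurableSet Q)
    (hch : ∀ Q ∈ F, ∀ R ∈ F, Q ⊆ R ∨ R ⊆ Q ∨ Q ∩ R = ∅)
    (hμ : ∀ Q ∈ F, μ Q ≠ 0 ∧ μ Q ≠ ∞) (h1 : ∀ Q ∈ F, ρ1 Q ≠ 0 ∧ ρ1 Q ≠ ∞)
    (h2 : ∀ Q ∈ F, ρ2 Q ≠ 0 ∧ ρ2 Q ≠ ∞) (h3 : ∀ Q ∈ F, ρ3 Q ≠ 0 ∧ ρ3 Q ≠ ∞)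
    (a b c : ℝ) (ha : 0 < a) (hb : 0 < b) (hc : 0 < c)
    (Q : Set α) (hQ : Q ∈ F) :
    ∑ Q' ∈ F with Q' ⊆ Q, (ρ1 Q' / μ Q') ^ a * (ρ2 Q' / μ Q') ^ b * (ρ3 Q' / μ Q') ^ c * μ Q'
     ≤ kolC (a + b + c) *
      ((ρ1 Q / μ Q) ^ a * (ρ2 Q / μ Q) ^ b * (ρ3 Q / μ Q) ^ c * μ Q) := by
  set s := a + b + c with hs
  have hs0 : 0 < s := by positivity
  -- the product identity
  have hid : ∀ x y z m : ℝ≥0∞, m ≠ 0 → m ≠ ∞ →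
      (x ^ s * m) ^ (a / s) * (y ^ s * m) ^ (b / s) * (z ^ s * m) ^ (c / s)
        = x ^ a * y ^ b * z ^ c * m := by
    intro x y z m hm0 hmt
    have e : ∀ t : ℝ, s * (t / s) = t := fun t => by field_simp
    rw [ENNReal.mul_rpow_of_nonneg _ _ (by positivity), ENNReal.mul_rpow_of_nonneg _ _ (by positivity),
      ENNReal.mul_rpow_of_nonneg _ _ (by positivity), ← ENNReal.rpow_mul, ← ENNReal.rpow_mul,
      ← ENNReal.rpow_mul, e, e, e]
    have : m ^ (a / s) * m ^ (b / s) * m ^ (c / s) = m := by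
      rw [← ENNReal.rpow_add _ _ hm0 hmt, ← ENNReal.rpow_add _ _ hm0 hmt, ← add_div, ← add_div,
        ← hs, div_self hs0.ne', ENNReal.rpow_one]
    calc _ = x ^ a * y ^ b * z ^ c * (m ^ (a / s) * m ^ (b / s) * m ^ (c / s)) := by ring
      _ = _ := by rw [this]
  have holder : ∀ (G : Finset (Set α)) (f : Fin 3 → Set α → ℝ≥0∞),
      ∑ R ∈ G, f 0 R ^ (a / s) * f 1 R ^ (b / s) * f 2 R ^ (c / s) ≤
      (∑ R ∈ G, f 0 R) ^ (a / s) * (∑ R ∈ G, f 1 R) ^ (b / s) * (∑ R ∈ G, f 2 R) ^ (c / s) := by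
    intro G f
    let _ : MeasurableSpace G := ⊤
    have := ENNReal.lintegral_prod_norm_pow_le (μ := (Measure.count : Measure G))
      (Finset.univ : Finset (Fin 3)) (f := fun i R => f i R)
      (fun i _ => (measurable_from_top).aemeasurable) (p := ![a / s, b / s, c / s])
      (by simp [Fin.sum_univ_three]; field_simp; linarith)
      (by intro i _; fin_cases i <;> simp <;> positivity)
    simp only [lintegral_fintype, Measure.count_singleton, mul_one, Fin.prod_univ_three] at this
    simp only [Finset.univ_eq_attach] at this
    rw [← Finset.sum_attach G, ← Finset.sum_attach G (f 0), ← Finset.sum_attach G (f 1),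
      ← Finset.sum_attach G (f 2)]
    simpa using this
  have hh := holder (F.filter (· ⊆ Q)) ![fun R => (ρ1 R / μ R) ^ s * μ R,
    fun R => (ρ2 R / μ R) ^ s * μ R, fun R => (ρ3 R / μ R) ^ s * μ R]
  simp only [Matrix.cons_val_zero, Matrix.cons_val_one, Matrix.cons_val] at hh
  have hmF : ∀ R ∈ F.filter (· ⊆ Q), R ∈ F := fun R hR => (Finset.mem_filter.mp hR).1
  rw [Finset.sum_congr rfl fun R hR => hid _ _ _ _ (hμ R (hmF R hR)).1 (hμ R (hmF R hR)).2] at hh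
  refine hh.trans ?_
  rw [← hid _ _ _ _ (hμ Q hQ).1 (hμ Q hQ).2]
  have hkol : kolC s ≠ 0 := by simp [kolC]
  calc _ ≤ (kolC s * ((ρ1 Q / μ Q) ^ s * μ Q)) ^ (a / s) *
        (kolC s * ((ρ2 Q / μ Q) ^ s * μ Q)) ^ (b / s) *
        (kolC s * ((ρ3 Q / μ Q) ^ s * μ Q)) ^ (c / s) := by
        gcongr
        · exact kolm μ ρ1 E F hE hd hm hch hμ h1 s hs0 Q hQ
        · exact kolm μ ρ2 E F hE hd hm hch hμ h2 s hs0 Q hQ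
        · exact kolm μ ρ3 E F hE hd hm hch hμ h3 s hs0 Q hQ
    _ = kolC s ^ (a / s + b / s + c / s) *
        (((ρ1 Q / μ Q) ^ s * μ Q) ^ (a / s) * ((ρ2 Q / μ Q) ^ s * μ Q) ^ (b / s) *
          ((ρ3 Q / μ Q) ^ s * μ Q) ^ (c / s)) := by
        rw [ENNReal.mul_rpow_of_nonneg _ _ (by positivity : 0 ≤ a / s),
          ENNReal.mul_rpow_of_nonneg _ _ (by positivity : 0 ≤ b / s),
          ENNReal.mul_rpow_of_nonneg _ _ (by positivity : 0 ≤ c / s),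
          ENNReal.rpow_add_of_nonneg (x := kolC s) (a / s + b / s) (c / s) (by positivity) (by positivity),
          ENNReal.rpow_add_of_nonneg (x := kolC s) (a / s) (b / s) (by positivity) (by positivity)]
        generalize ((ρ1 Q / μ Q) ^ s * μ Q) ^ (a / s) = z1
        generalize ((ρ2 Q / μ Q) ^ s * μ Q) ^ (b / s) = z2
        generalize ((ρ3 Q / μ Q) ^ s * μ Q) ^ (c / s) = z3
        ring
    _ = _ := by
        rw [← add_div, ← add_div, ← hs, div_self hs0.ne', ENNReal.rpow_one]

/-- Monomials in four extended nonnegative variables with real exponents. -/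
noncomputable def mm (A X V Y : ℝ≥0∞) (d a b c : ℝ) : ℝ≥0∞ := A ^ d * X ^ a * V ^ b * Y ^ c

theorem mm_mul {A X V Y : ℝ≥0∞} (hA : A ≠ 0 ∧ A ≠ ∞) (hX : X ≠ 0 ∧ X ≠ ∞) (hV : V ≠ 0 ∧ V ≠ ∞)
    (hY : Y ≠ 0 ∧ Y ≠ ∞) (d a b c d' a' b' c' : ℝ) :
    mm A X V Y d a b c * mm A X V Y d' a' b' c' = mm A X V Y (d + d') (a + a') (b + b') (c + c') := by
  unfold mm
  rw [ENNReal.rpow_add _ _ hA.1 hA.2, ENNReal.rpow_add _ _ hX.1 hX.2,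
    ENNReal.rpow_add _ _ hV.1 hV.2, ENNReal.rpow_add _ _ hY.1 hY.2]
  generalize A ^ d = z1
  generalize X ^ a = z2
  generalize V ^ b = z3
  generalize Y ^ c = z4
  ring

theorem mm_rpow {A X V Y : ℝ≥0∞} (hA : A ≠ 0 ∧ A ≠ ∞) (hX : X ≠ 0 ∧ X ≠ ∞) (hV : V ≠ 0 ∧ V ≠ ∞)
    (hY : Y ≠ 0 ∧ Y ≠ ∞) (d a b c r : ℝ) :
    mm A X V Y d a b c ^ r = mm A X V Y (d * r) (a * r) (b * r) (c * r) := by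
  unfold mm
  have nz : ∀ {Z : ℝ≥0∞}, (Z ≠ 0 ∧ Z ≠ ∞) → ∀ t : ℝ, Z ^ t ≠ 0 := fun h t => by
    simp [ENNReal.rpow_eq_zero_iff, h.1, h.2]
  rw [ENNReal.mul_rpow_of_ne_zero (mul_ne_zero (mul_ne_zero (nz hA _) (nz hX _)) (nz hV _)) (nz hY _),
    ENNReal.mul_rpow_of_ne_zero (mul_ne_zero (nz hA _) (nz hX _)) (nz hV _),
    ENNReal.mul_rpow_of_ne_zero (nz hA _) (nz hX _), ← ENNReal.rpow_mul, ← ENNReal.rpow_mul,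
    ← ENNReal.rpow_mul, ← ENNReal.rpow_mul]

theorem core {α : Type*} [MeasurableSpace α] (u u1 u2 τ q : ℝ) 
    (hsum : u + u1 + u2 = 2) (hq : 1 < q) (hqu : u2 * q = 1)
    (hτ1 : 1 < τ) (hτu : τ * u < 1) (hτu1 : τ * u1 < 1) (hτu2 : τ * u2 < 1)
    (hτq : τ * (q - 1) < q) :
    ∃ C : ℝ≥0∞, C ≠ ∞ ∧ ∀ (μ ρ1 ρ2 ρ3 : Measure α) (A : ℝ≥0∞) (E : Set α → Set α)
    (F : Finset (Set α)), (A ≠ 0 ∧ A ≠ ∞) →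
    (∀ Q ∈ F, E Q ⊆ Q ∧ MeasurableSet (E Q) ∧ μ Q ≤ 2 * μ (E Q)) →
    ((F : Set (Set α)).Pairwise fun Q R => Disjoint (E Q) (E R)) →
    (∀ Q ∈ F, MeasurableSet Q) →
    (∀ Q ∈ F, ∀ R ∈ F, Q ⊆ R ∨ R ⊆ Q ∨ Q ∩ R = ∅) →
    (∀ Q ∈ F, μ Q ≠ 0 ∧ μ Q ≠ ∞) → (∀ Q ∈ F, ρ1 Q ≠ 0 ∧ ρ1 Q ≠ ∞) →
    (∀ Q ∈ F, ρ2 Q ≠ 0 ∧ ρ2 Q ≠ ∞) → (∀ Q ∈ F, ρ3 Q ≠ 0 ∧ ρ3 Q ≠ ∞) →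
    (∀ Q ∈ F, ∀ θ : ℝ, 0 ≤ θ → mm A (ρ1 Q / μ Q) (ρ2 Q / μ Q) (ρ3 Q / μ Q)
      (-(u * θ)) (u1 * θ) (u * θ) (u2 * θ) ≤ 1) →
    ∫⁻ x, (∑ Q ∈ F, Q.indicator (fun _ => ρ1 Q / μ Q * (ρ2 Q / μ Q)) x) ^ q ∂ρ3 ≤
      C * ∑ Q ∈ F, mm A (ρ1 Q / μ Q) (ρ2 Q / μ Q) (ρ3 Q / μ Q)
        (u * q) (q * (1 - u1)) (q * (1 - u)) 0 * μ Q := by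
  classical
  have hu2 : 0 < u2 := by
    by_contra h
    nlinarith
  set a := 1 - τ * u1 with ha
  set b := 1 - τ * u with hb
  set c := 1 - τ * u2 with hc
  have habc : a + b + c < 1 := by nlinarith
  have hce : ∀ r : ℝ, 0 ≤ r → r + 1 ≤ max 1 (q - 1) → 0 < c * (r + 1) - r := by
    intro r hr0 hr
    have : τ * u2 * (r + 1) < 1 := by
      rcases le_max_iff.mp hr with h | h
      · have : r = 0 := by linarith
        rw [this]; linarith
      · have h1 : τ * u2 * (r + 1) ≤ τ * u2 * (q - 1) := by gcongr
        have h2 : u2 * (τ * (q - 1)) < u2 * q := by gcongr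
        nlinarith
    rw [hc]; nlinarith
  obtain ⟨C, hC, hiter⟩ := iter_bound (α := α) (max 1 (q - 1)) (le_max_left _ _)
    (fun r => kolC (a * (r + 1) + b * (r + 1) + (c * (r + 1) - r)))
    (fun r hr0 hr => by
      have := hce r hr0 hr
      have h1 : 0 < a := by linarith
      have h2 : 0 < b := by linarith
      exact kolC_ne_top _ (by positivity) (by nlinarith)) ⌈q⌉₊ (q - 1) (by linarith)
      (le_max_right _ _) (by linarith [Nat.le_ceil q])
  refine ⟨ENNReal.ofReal q * C, ENNReal.mul_ne_top ENNReal.ofReal_ne_top hC, ?_⟩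
  intro μ ρ1 ρ2 ρ3 A E F hA hE hd hm hch hμ h1 h2 h3 hAP
  have hav : ∀ ρ : Measure α, (∀ Q ∈ F, ρ Q ≠ 0 ∧ ρ Q ≠ ∞) → ∀ Q ∈ F,
      ρ Q / μ Q ≠ 0 ∧ ρ Q / μ Q ≠ ∞ := by
    intro ρ hρ Q hQ
    refine ⟨?_, ENNReal.div_ne_top (hρ Q hQ).2 (hμ Q hQ).1⟩
    rw [Ne, ENNReal.div_eq_zero_iff]; push Not; exact ⟨(hρ Q hQ).1, (hμ Q hQ).2⟩
  have hX := hav ρ1 h1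
  have hV := hav ρ2 h2
  have hY := hav ρ3 h3
  have hYμ : ∀ Q ∈ F, ρ3 Q = ρ3 Q / μ Q * μ Q := fun Q hQ =>
    (ENNReal.div_mul_cancel (hμ Q hQ).1 (hμ Q hQ).2).symm
  let B : Set α → ℝ≥0∞ := fun Q => mm A (ρ1 Q / μ Q) (ρ2 Q / μ Q) (ρ3 Q / μ Q)
    (u * τ) a b (c - 1)
  have hBr : ∀ Q ∈ F, ∀ r, B Q ^ r = mm A (ρ1 Q / μ Q) (ρ2 Q / μ Q) (ρ3 Q / μ Q)
    (u * τ * r) (a * r) (b * r) ((c - 1) * r) := fun Q hQ r =>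
      mm_rpow hA (hX Q hQ) (hV Q hQ) (hY Q hQ) _ _ _ _ r
  -- the basic identity
  have hterm : ∀ Q ∈ F, ∀ r, ρ1 Q / μ Q * (ρ2 Q / μ Q) * B Q ^ r * ρ3 Q =
      mm A (ρ1 Q / μ Q) (ρ2 Q / μ Q) (ρ3 Q / μ Q)
        (u * τ * r) (1 + a * r) (1 + b * r) (1 + (c - 1) * r) * μ Q := by
    intro Q hQ r
    have e : mm A (ρ1 Q / μ Q) (ρ2 Q / μ Q) (ρ3 Q / μ Q) 0 1 1 1 =
      ρ1 Q / μ Q * (ρ2 Q / μ Q) * (ρ3 Q / μ Q) := by simp [mm]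
    have e2 := mm_mul hA (hX Q hQ) (hV Q hQ) (hY Q hQ) 0 1 1 1
      (u * τ * r) (a * r) (b * r) ((c - 1) * r)
    rw [zero_add, e, ← hBr Q hQ] at e2
    rw [← e2]
    have e3 : ∀ P : ℝ≥0∞, P * ρ3 Q = P * (ρ3 Q / μ Q * μ Q) := fun P => by rw [← hYμ Q hQ]
    rw [e3]
    generalize ρ3 Q / μ Q = z3
    generalize B Q ^ r = z4
    ring
  have hdrop : ∀ Q ∈ F, ∀ θ : ℝ, 0 ≤ θ → ∀ d a b c d' a' b' c' : ℝ,
      d = -(u * θ) + d' → a = u1 * θ + a' → b = u * θ + b' → c = u2 * θ + c' →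
      mm A (ρ1 Q / μ Q) (ρ2 Q / μ Q) (ρ3 Q / μ Q) d a b c ≤ 
      mm A (ρ1 Q / μ Q) (ρ2 Q / μ Q) (ρ3 Q / μ Q) d' a' b' c' := by
    intro Q hQ θ hθ d a b c d' a' b' c' e1 e2 e3 e4
    rw [e1, e2, e3, e4, ← mm_mul hA (hX Q hQ) (hV Q hQ) (hY Q hQ)]
    calc _ ≤ 1 * mm A (ρ1 Q / μ Q) (ρ2 Q / μ Q) (ρ3 Q / μ Q) d' a' b' c' := by
          gcongr; exact hAP Q hQ θ hθ
      _ = _ := one_mul _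
  have hH := hiter ρ3 F hm hch h3 (fun Q => ρ1 Q / μ Q * (ρ2 Q / μ Q)) B (by
    intro r hr0 hr Q hQ
    have hk := kolm3 μ ρ1 ρ2 ρ3 E F hE hd hm hch hμ h1 h2 h3 (a * (r + 1)) (b * (r + 1))
      (c * (r + 1) - r) (mul_pos (by linarith) (by linarith)) (mul_pos (by linarith) (by linarith))
      (hce r hr0 hr) Q hQ
    calc _ ≤ ∑ Q' ∈ F with Q' ⊆ Q, mm A (ρ1 Q' / μ Q') (ρ2 Q' / μ Q') (ρ3 Q' / μ Q')
          (u * τ * (r + 1)) (a * (r + 1)) (b * (r + 1)) (c * (r + 1) - r) * μ Q' := by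
          refine Finset.sum_le_sum fun Q' hQ' => ?_
          have hQF := (Finset.mem_filter.mp hQ').1
          rw [hterm Q' hQF]
          gcongr
          apply hdrop Q' hQF τ (by linarith)
          · ring
          · rw [ha]; ring
          · rw [hb]; ring
          · rw [hc]; ring
      _ = A ^ (u * τ * (r + 1)) * ∑ Q' ∈ F with Q' ⊆ Q, (ρ1 Q' / μ Q') ^ (a * (r + 1)) *
          (ρ2 Q' / μ Q') ^ (b * (r + 1)) * (ρ3 Q' / μ Q') ^ (c * (r + 1) - r) * μ Q' := by
          rw [Finset.mul_sum]
          refine Finset.sum_congr rfl fun Q' hQ' => ?_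
          simp only [mm, mul_assoc]
      _ ≤ _ := by
          refine (mul_le_mul' le_rfl hk).trans (le_of_eq ?_)
          rw [hBr Q hQ]
          have e3 : ∀ P : ℝ≥0∞, P * ρ3 Q = P * (ρ3 Q / μ Q * μ Q) := fun P => by rw [← hYμ Q hQ]
          rw [e3]
          have e : (c * (r + 1) - r) = (c - 1) * (r + 1) + 1 := by ring
          rw [e, ENNReal.rpow_add ((c - 1) * (r + 1)) 1 (hY Q hQ).1 (hY Q hQ).2, ENNReal.rpow_one]
          unfold mm
          generalize kolC _ = z0
          generalize A ^ (u * τ * (r + 1)) = z1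
          generalize (ρ1 Q / μ Q) ^ (a * (r + 1)) = z2
          generalize (ρ2 Q / μ Q) ^ (b * (r + 1)) = z3
          generalize (ρ3 Q / μ Q) ^ ((c - 1) * (r + 1)) = z4
          ring)
  have hs := int_step ρ3 (fun Q => ρ1 Q / μ Q * (ρ2 Q / μ Q)) (q - 1) (by linarith) F hm hch
  rw [sub_add_cancel] at hs
  refine hs.trans ?_
  rw [mul_assoc]
  gcongr
  rw [Finset.mul_sum]
  refine Finset.sum_le_sum fun Q hQ => ?_
  calc _ ≤ ρ1 Q / μ Q * (ρ2 Q / μ Q) * (C * B Q ^ (q - 1) * ρ3 Q) := by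
        gcongr
        exact hH Q hQ
    _ = C * (ρ1 Q / μ Q * (ρ2 Q / μ Q) * B Q ^ (q - 1) * ρ3 Q) := by
        generalize B Q ^ (q - 1) = z
        ring
    _ ≤ _ := by
        rw [hterm Q hQ]
        gcongr
        apply hdrop Q hQ (q - τ * (q - 1)) (by linarith)
        · ring
        · rw [ha]; ring
        · rw [hb]; ring
        · rw [hc]; linear_combination -hqu

theorem cube_facts {n : ℕ} {Q : Set (Rn n)} (h : IsCube Q) :
    MeasurableSet Q ∧ volume Q ≠ 0 ∧ volume Q ≠ ∞ := by
  obtain ⟨l, hl, c, rfl⟩ := h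
  have e : {x : Rn n | ∀ i, c i ≤ x i ∧ x i < c i + l} =
      univ.pi fun i => Ico (c i) (c i + l) := by
    ext x; simp [Set.mem_pi]
  rw [e]
  refine ⟨MeasurableSet.univ_pi fun i => measurableSet_Ico, ?_, ?_⟩
  · rw [Real.volume_pi_Ico, Finset.prod_ne_zero_iff]
    intro i _
    simp [hl]
  · rw [Real.volume_pi_Ico]
    exact ENNReal.prod_ne_top fun i _ => ENNReal.ofReal_ne_top

theorem conj_facts {q : ℝ} (hq : 1 < q) : 1 < conj q ∧ 1 / conj q = 1 - 1 / q := by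
  unfold conj
  have : 0 < q - 1 := by linarith
  refine ⟨by rw [lt_div_iff₀ this]; linarith, by field_simp⟩

theorem dual_mass_ne_zero {n : ℕ} {w : Rn n → ℝ≥0∞} (hw : IsWeight w) {q : ℝ} (hq : 1 < q)
    {Q : Set (Rn n)} (hQ : IsCube Q) : mass (dualW q w) Q ≠ 0 := by
  intro h0
  have hmeas : Measurable (dualW q w) := hw.1.pow_const _
  unfold mass at h0
  rw [lintegral_eq_zero_iff hmeas] at h0
  have hfin := ae_lt_top hw.1 (hw.2 Q hQ)
  have hF : ∀ᵐ x ∂(volume.restrict Q), False := by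
    filter_upwards [h0, hfin] with x h1 h2
    simp only [dualW, Pi.zero_apply, ENNReal.rpow_eq_zero_iff] at h1
    have := (conj_facts hq).1
    rcases h1 with h | h
    · linarith [h.2]
    · exact h2.ne h.1
  rw [ae_iff] at hF
  simp at hF
  exact (cube_facts hQ).2.1 hF

/-- `L^{p₂'}(σ₂)` bound for `∑_{Q∈S} ⟨σ₁⟩_Q ⟨v_{\vec w}⟩_Q χ_Q`. -/
theorem statement7 {n : ℕ} (p p1 p2 : ℝ)
    (hp1 : 1 < p1) (hp2 : 1 < p2) (hp : 1 / p = 1 / p1 + 1 / p2) (hp0 : 1 < p) :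
    ∃ C : ℝ≥0∞, C ≠ ∞ ∧
      ∀ w1 w2 : Rn n → ℝ≥0∞, IsWeight w1 → IsWeight w2 →
        APconst p p1 p2 w1 w2 ≠ ∞ →
        ∀ S : Set (Set (Rn n)), S.Countable → (∀ Q ∈ S, IsCube Q) →
          (∀ Q ∈ S, ∀ R ∈ S, Q ⊆ R ∨ R ⊆ Q ∨ Q ∩ R = ∅) → IsSparse S →
          lpNorm
              (fun x => ∑' Q : S,
                Set.indicator (Q : Set (Rn n))
                  (fun _ => avg (dualW p1 w1) Q * avg (vweight p p1 p2 w1 w2) Q) x)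
              (conj p2) (dualW p2 w2) ≤
            C * APconst p p1 p2 w1 w2 ^ (1 / p) *
              (∑' Q : S,
                avg (dualW p1 w1) (Q : Set (Rn n)) ^ (conj p2 / p1) *
                  avg (vweight p p1 p2 w1 w2) (Q : Set (Rn n)) ^ (conj p2 / conj p) *
                  volume (Q : Set (Rn n))) ^ (1 / conj p2) := by
  classical
  have hp1' : 0 < p1 := by linarith
  have hp2' : 0 < p2 := by linarith
  have hp' : 0 < p := by linarith
  obtain ⟨hc1, hu1⟩ := conj_facts hp1
  obtain ⟨hc2, hu2⟩ := conj_facts hp2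
  obtain ⟨hc, hu⟩ := conj_facts hp0
  have hcp1 : 0 < conj p1 := by linarith
  have hcp2 : 0 < conj p2 := by linarith
  have hcp : 0 < conj p := by linarith
  obtain ⟨τ, hτ1, hτ⟩ := exists_between (show 1 < min (min p p2) (min (conj p1) (conj p2)) by
    simp [hp0, hp2, hc1, hc2])
  simp only [lt_min_iff] at hτ
  obtain ⟨C, hC, hcore⟩ := core (α := Rn n) (1 / p) (1 / conj p1) (1 / conj p2) τ (conj p2)
    (by rw [hu1, hu2]; linarith) hc2 (by field_simp) hτ1
    (by rw [mul_one_div, div_lt_one hp']; exact hτ.1.1)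
    (by rw [mul_one_div, div_lt_one hcp1]; exact hτ.2.1)
    (by rw [mul_one_div, div_lt_one hcp2]; exact hτ.2.2)
    (by
      have e : conj p2 = p2 * (conj p2 - 1) := by
        unfold conj
        have : p2 - 1 ≠ 0 := by linarith
        field_simp; ring
      have h1 : 0 < conj p2 - 1 := by linarith
      calc τ * (conj p2 - 1) < p2 * (conj p2 - 1) := by gcongr; exact hτ.1.2
        _ = conj p2 := e.symm)
  refine ⟨C ^ (1 / conj p2), ENNReal.rpow_ne_top_of_nonneg (by positivity) hC, ?_⟩
  intro w1 w2 hw1 hw2 hA S hSc hScube hSn hSs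
  set A := APconst p p1 p2 w1 w2 with hAdef
  set σ1 := dualW p1 w1 with hσ1
  set σ2 := dualW p2 w2 with hσ2
  set v := vweight p p1 p2 w1 w2 with hv
  have mσ1 : Measurable σ1 := hw1.1.pow_const _
  have mσ2 : Measurable σ2 := hw2.1.pow_const _
  obtain ⟨E, hE, hEd⟩ := hSs
  have havg : ∀ (f : Rn n → ℝ≥0∞) (Q : Set (Rn n)), IsCube Q →
      avg f Q = volume.withDensity f Q / volume Q := by
    intro f Q hQ
    rw [withDensity_apply _ (cube_facts hQ).1]; rfl
  have hAle : ∀ Q, IsCube Q → avg v Q * avg σ1 Q ^ (p / conj p1) * avg σ2 Q ^ (p / conj p2) ≤ A :=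
    fun Q hQ => le_iSup₂_of_le (f := fun Q (_ : IsCube Q) => avg v Q * avg σ1 Q ^ (p / conj p1) *
      avg σ2 Q ^ (p / conj p2)) Q hQ le_rfl
  have hX0 : ∀ Q, IsCube Q → avg σ1 Q ≠ 0 := fun Q hQ => by
    unfold avg
    rw [Ne, ENNReal.div_eq_zero_iff]; push Not
    exact ⟨dual_mass_ne_zero hw1 hp1 hQ, (cube_facts hQ).2.2⟩
  have hY0 : ∀ Q, IsCube Q → avg σ2 Q ≠ 0 := fun Q hQ => by
    unfold avg
    rw [Ne, ENNReal.div_eq_zero_iff]; push Not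
    exact ⟨dual_mass_ne_zero hw2 hp2 hQ, (cube_facts hQ).2.2⟩
  have hgood : ∀ Q, IsCube Q → avg v Q ≠ 0 →
      A ≠ 0 ∧ avg v Q ≠ ∞ ∧ avg σ1 Q ≠ ∞ ∧ avg σ2 Q ≠ ∞ := by
    intro Q hQ hVQ
    have h1 := hAle Q hQ
    have e1 : 0 < p / conj p1 := by positivity
    have e2 : 0 < p / conj p2 := by positivity
    have n1 : avg σ1 Q ^ (p / conj p1) ≠ 0 := by
      rw [Ne, ENNReal.rpow_eq_zero_iff_of_pos e1]; exact hX0 Q hQ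
    have n2 : avg σ2 Q ^ (p / conj p2) ≠ 0 := by
      rw [Ne, ENNReal.rpow_eq_zero_iff_of_pos e2]; exact hY0 Q hQ
    have ht := ne_top_of_le_ne_top hA h1
    refine ⟨fun h0 => ?_, fun h => ht ?_, fun h => ht ?_, fun h => ht ?_⟩
    · rw [h0, nonpos_iff_eq_zero] at h1
      exact mul_ne_zero (mul_ne_zero hVQ n1) n2 h1
    · rw [h, ENNReal.top_mul n1, ENNReal.top_mul n2]
    · rw [h, ENNReal.top_rpow_of_pos e1, ENNReal.mul_top hVQ, ENNReal.top_mul n2]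
    · rw [h, ENNReal.top_rpow_of_pos e2, ENNReal.mul_top (mul_ne_zero hVQ n1)]
  set T : Set (Rn n) → ℝ≥0∞ := fun Q => avg σ1 Q ^ (conj p2 / p1) *
    avg v Q ^ (conj p2 / conj p) * volume Q with hT
  -- the finite bound
  have hfin : ∀ G : Finset S, ∫⁻ x, (∑ Q ∈ G, (Q : Set (Rn n)).indicator
      (fun _ => avg σ1 Q * avg v Q) x) ^ conj p2 ∂(volume.withDensity σ2) ≤
      C * (A ^ (1 / p * conj p2) * ∑' Q : S, T Q) := by
    intro G
    set F : Finset (Set (Rn n)) := (G.map (Function.Embedding.subtype _)).filter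
      (fun Q => avg v Q ≠ 0) with hF
    have hFS : ∀ Q ∈ F, Q ∈ S ∧ avg v Q ≠ 0 := by
      intro Q hQ
      rw [hF, Finset.mem_filter, Finset.mem_map] at hQ
      obtain ⟨⟨R, _, rfl⟩, h2⟩ := hQ
      exact ⟨R.2, h2⟩
    have hsum : ∀ x, ∑ Q ∈ G, (Q : Set (Rn n)).indicator (fun _ => avg σ1 Q * avg v Q) x =
        ∑ Q ∈ F, Q.indicator (fun _ => volume.withDensity σ1 Q / volume Q *
          (volume.withDensity v Q / volume Q)) x := by
      intro x
      have e1 : ∑ Q ∈ F, Q.indicator (fun _ => volume.withDensity σ1 Q / volume Q *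
          (volume.withDensity v Q / volume Q)) x =
          ∑ Q ∈ F, Q.indicator (fun _ => avg σ1 Q * avg v Q) x := by
        refine Finset.sum_congr rfl fun Q hQ => ?_
        rw [havg σ1 Q (hScube Q (hFS Q hQ).1), havg v Q (hScube Q (hFS Q hQ).1)]
      rw [e1, hF, Finset.sum_filter_of_ne, Finset.sum_map]
      · rfl
      · intro Q _ hne h0
        apply hne
        rw [h0, mul_zero, Set.indicator_zero]
    simp only [hsum]
    rcases F.eq_empty_or_nonempty with hFe | ⟨Q0, hQ0⟩
    · simp [hFe, hcp2]
    have hA0 : A ≠ 0 := (hgood Q0 (hScube Q0 (hFS Q0 hQ0).1) (hFS Q0 hQ0).2).1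
    have hmass : ∀ f : Rn n → ℝ≥0∞, ∀ Q ∈ F, avg f Q ≠ 0 → avg f Q ≠ ∞ →
        volume.withDensity f Q ≠ 0 ∧ volume.withDensity f Q ≠ ∞ := by
      intro f Q hQ h0 ht
      have hcube := hScube Q (hFS Q hQ).1
      rw [havg f Q hcube] at h0 ht
      refine ⟨fun h => h0 (by rw [h, ENNReal.zero_div]), fun h => ht ?_⟩
      rw [h, ENNReal.top_div_of_ne_top (cube_facts hcube).2.2]
    refine (hcore volume (volume.withDensity σ1) (volume.withDensity v) (volume.withDensity σ2)
      A E F ⟨hA0, hA⟩ (fun Q hQ => hE Q (hFS Q hQ).1)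
      (hEd.mono fun Q hQ => (hFS Q hQ).1) (fun Q hQ => (cube_facts (hScube Q (hFS Q hQ).1)).1)
      (fun Q hQ R hR => hSn Q (hFS Q hQ).1 R (hFS R hR).1)
      (fun Q hQ => (cube_facts (hScube Q (hFS Q hQ).1)).2)
      (fun Q hQ => hmass _ Q hQ (hX0 Q (hScube Q (hFS Q hQ).1))
        (hgood Q (hScube Q (hFS Q hQ).1) (hFS Q hQ).2).2.2.1)
      (fun Q hQ => hmass _ Q hQ (hFS Q hQ).2
        (hgood Q (hScube Q (hFS Q hQ).1) (hFS Q hQ).2).2.1)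
      (fun Q hQ => hmass _ Q hQ (hY0 Q (hScube Q (hFS Q hQ).1))
        (hgood Q (hScube Q (hFS Q hQ).1) (hFS Q hQ).2).2.2.2) ?_).trans ?_
    · intro Q hQ θ hθ
      have hcube := hScube Q (hFS Q hQ).1
      rw [← havg σ1 Q hcube, ← havg v Q hcube, ← havg σ2 Q hcube]
      have hz : 0 ≤ 1 / p * θ := by positivity
      have h1 := ENNReal.rpow_le_rpow (hAle Q hcube) hz
      rw [ENNReal.mul_rpow_of_nonneg _ _ hz, ENNReal.mul_rpow_of_nonneg _ _ hz,
        ← ENNReal.rpow_mul, ← ENNReal.rpow_mul,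
        show p / conj p1 * (1 / p * θ) = 1 / conj p1 * θ by field_simp,
        show p / conj p2 * (1 / p * θ) = 1 / conj p2 * θ by field_simp] at h1
      unfold mm
      calc _ = A ^ (-(1 / p * θ)) * (avg v Q ^ (1 / p * θ) * avg σ1 Q ^ (1 / conj p1 * θ) *
            avg σ2 Q ^ (1 / conj p2 * θ)) := by
            generalize avg v Q ^ (1 / p * θ) = z1
            generalize avg σ1 Q ^ (1 / conj p1 * θ) = z2
            generalize avg σ2 Q ^ (1 / conj p2 * θ) = z3
            generalize A ^ (-(1 / p * θ)) = z4
            ring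
        _ ≤ A ^ (-(1 / p * θ)) * A ^ (1 / p * θ) := by gcongr
        _ = 1 := by rw [← ENNReal.rpow_add _ _ hA0 hA]; simp
    · gcongr
      rw [← ENNReal.tsum_mul_left]
      calc _ = ∑ Q ∈ F, A ^ (1 / p * conj p2) * T Q := by
            refine Finset.sum_congr rfl fun Q hQ => ?_
            have hcube := hScube Q (hFS Q hQ).1
            rw [← havg σ1 Q hcube, ← havg v Q hcube, ← havg σ2 Q hcube]
            have e1 : conj p2 * (1 - 1 / conj p1) = conj p2 / p1 := by rw [hu1]; ring
            have e2 : conj p2 * (1 - 1 / p) = conj p2 / conj p := by rw [← hu]; ring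
            rw [e1, e2, hT]
            simp only [mm, ENNReal.rpow_zero, mul_one, mul_assoc]
        _ ≤ ∑ Q ∈ G.map (Function.Embedding.subtype _), A ^ (1 / p * conj p2) * T Q :=
            Finset.sum_le_sum_of_subset (Finset.filter_subset _ _)
        _ = ∑ Q ∈ G, A ^ (1 / p * conj p2) * T Q := by rw [Finset.sum_map]; rfl
        _ ≤ _ := ENNReal.sum_le_tsum G
  have hcount : Countable S := hSc.to_subtype
  have hmeasG : ∀ G : Finset S, Measurable (fun x => (∑ Q ∈ G, (Q : Set (Rn n)).indicator
      (fun _ => avg σ1 Q * avg v Q) x) ^ conj p2) := by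
    intro G
    refine Measurable.pow_const ?_ _
    refine Finset.measurable_sum _ fun Q _ => ?_
    exact measurable_const.indicator (cube_facts (hScube Q Q.2)).1
  have hsup : ∀ x, (∑' Q : S, (Q : Set (Rn n)).indicator (fun _ => avg σ1 Q * avg v Q) x) ^ conj p2
      = ⨆ G : Finset S, (∑ Q ∈ G, (Q : Set (Rn n)).indicator
      (fun _ => avg σ1 Q * avg v Q) x) ^ conj p2 := by
    intro x
    rw [ENNReal.tsum_eq_iSup_sum]
    exact (ENNReal.orderIsoRpow (conj p2) hcp2).map_iSup _
  have hmeas : Measurable fun x => (∑' Q : S, (Q : Set (Rn n)).indicator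
      (fun _ => avg σ1 Q * avg v Q) x) ^ conj p2 := by
    simp only [hsup]
    exact Measurable.iSup hmeasG
  have hmain : ∫⁻ x, (∑' Q : S, (Q : Set (Rn n)).indicator (fun _ => avg σ1 Q * avg v Q) x) ^ conj p2
      * σ2 x ≤ C * (A ^ (1 / p * conj p2) * ∑' Q : S, T Q) := by
    have e := lintegral_withDensity_eq_lintegral_mul volume mσ2 hmeas
    simp only [Pi.mul_apply] at e
    simp only [mul_comm _ (σ2 _)]
    rw [← e]
    simp only [hsup]
    rw [lintegral_iSup_directed (fun G => (hmeasG G).aemeasurable)]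
    · exact iSup_le hfin
    · refine Monotone.directed_le fun G G' hG x => ?_
      exact ENNReal.rpow_le_rpow (Finset.sum_le_sum_of_subset hG) hcp2.le
  unfold _root_.lpNorm
  refine (ENNReal.rpow_le_rpow hmain (by positivity)).trans (le_of_eq ?_)
  have hz : 0 ≤ 1 / conj p2 := by positivity
  rw [ENNReal.mul_rpow_of_nonneg _ _ hz, ENNReal.mul_rpow_of_nonneg _ _ hz, ← ENNReal.rpow_mul,
    show 1 / p * conj p2 * (1 / conj p2) = 1 / p by field_simp, mul_assoc]
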